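/- arXiv:1510.03033 — 2 statements merged into one kernel-verified Lean document; each statement's English description precedes it below -/
import Mathlib

section
/- For every composition I = (i_1, …, i_r) of n and every real number q, n! · g_I(q) = (1−q)^r · Σ_π q^{sinv(π)}, where the sum ranges over all permutitions π of size n with c(π) = I. Equivalently, the polynomial P_I(q) = n! g_I(q)/(1−q)^{ℓ(I)} is the generating polynomial of the statistic sinv over permutitions of composition I. -/
/-- `G q [i_k, …, i_1] t` is the iterated integral
`G_{(i_1,…,i_k)}(t) = ∫_q^t s^{i_k−1} G_{(i_1,…,i_{k−1})}(s) ds`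
(the list argument is the composition read in reverse). -/
noncomputable def G (q : ℝ) : List ℕ → ℝ → ℝ
  | [], _ => 1
  | i :: J, t => ∫ s in q..t, s ^ (i - 1) * G q J s

/-- The composition polynomial `g_I(q) = G_{(i_1,…,i_r)}(1)`. -/
noncomputable def g (q : ℝ) (I : List ℕ) : ℝ := G q I.reverse 1

/-- A permutition (set of lists) of size `n`, represented canonically: the list of
blocks, each block a nonempty list of distinct letters, the letters partitioning
`{1, …, n}`, and the blocks ordered by increasing value of their last letters. -/
def IsPermutition (n : ℕ) (L : List (List ℕ)) : Prop :=
  (∀ B ∈ L, B ≠ []) ∧ L.flatten.Nodup ∧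
    (∀ x, x ∈ L.flatten ↔ 1 ≤ x ∧ x ≤ n) ∧
    List.Chain' (· < ·) (L.map fun B => B.getLastD 0)

/-- `c(π)`: the composition of `n` formed by the block sizes, blocks being ordered by
increasing last letter. -/
def shape (L : List (List ℕ)) : List ℕ := L.map List.length

/-- `sinv(π)`: the number of letters strictly greater than the last letter of their block. -/
def sinv (L : List (List ℕ)) : ℕ :=
  (L.map fun B => B.countP fun x => decide (B.getLastD 0 < x)).sum

section Analytic

lemma continuous_G (q : ℝ) : ∀ J : List ℕ, Continuous (G q J)
  | [] => continuous_const
  | i :: J => by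
    have h := continuous_G q J
    exact intervalIntegral.continuous_primitive
      (fun a b => (by fun_prop : Continuous fun s => s ^ (i - 1) * G q J s).intervalIntegrable a b) q

lemma hasDerivAt_G_cons (q : ℝ) (i : ℕ) (J : List ℕ) (t : ℝ) :
    HasDerivAt (G q (i :: J)) (t ^ (i - 1) * G q J t) t := by
  have h := continuous_G q J
  have hc : Continuous fun s => s ^ (i - 1) * G q J s := by fun_prop
  exact hc.integral_hasStrictDerivAt q t |>.hasDerivAt

lemma G_cons_self (q : ℝ) (i : ℕ) (J : List ℕ) : G q (i :: J) q = 0 := by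
  simp [G]

/-- The list `[c (r - 1), …, c 0]`. -/
def revList (c : ℕ → ℕ) : ℕ → List ℕ
  | 0 => []
  | r + 1 => c r :: revList c r

lemma revList_congr {c d : ℕ → ℕ} : ∀ {r : ℕ}, (∀ j < r, c j = d j) → revList c r = revList d r
  | 0, _ => rfl
  | r + 1, h => by
    rw [revList, revList, h r (by omega), revList_congr fun j hj => h j (by omega)]

lemma revList_eq (c : ℕ → ℕ) : ∀ r, revList c r = ((List.range r).map c).reverse
  | 0 => rfl
  | r + 1 => by simp [revList, revList_eq c r, List.range_succ]

/-- The boundary term of the Euler relation `sum_mul_G_revList`. -/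
noncomputable def boundaryTerm (q : ℝ) (c : ℕ → ℕ) : ℕ → ℝ → ℝ
  | 0, _ => 0
  | r + 1, t => (t - q) * t ^ (c r - 1) * G q (revList c r) t

/-- Euler's relation for the iterated integrals, which are homogeneous in `(q, t)`. -/
lemma sum_mul_G_revList (q : ℝ) (c : ℕ → ℕ) :
    ∀ (r : ℕ) (_ : ∀ j < r, 0 < c j) (t : ℝ),
      (∑ j ∈ Finset.range r, (c j : ℝ)) * G q (revList c r) t =
        q * ∑ j ∈ Finset.range r, ((c j : ℝ) - 1) *
          G q (revList (Function.update c j (c j - 1)) r) t + boundaryTerm q c r t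
  | 0, _, t => by simp [boundaryTerm]
  | r + 1, hc, t => by
    have ih := sum_mul_G_revList q c r (fun j hj => hc j (by omega))
    obtain ⟨k, hk⟩ : ∃ k, c r = k + 1 := ⟨c r - 1, by have := hc r (by omega); omega⟩
    have hlow : ∀ j ∈ Finset.range r, ∀ t,
        G q (revList (Function.update c j (c j - 1)) (r + 1)) t =
          G q ((k + 1) :: revList (Function.update c j (c j - 1)) r) t := by
      intro j hj t
      have : r ≠ j := by have := Finset.mem_range.1 hj; omega
      rw [revList, Function.update_of_ne this, hk]
    have htop : revList (Function.update c r (c r - 1)) (r + 1) = k :: revList c r := by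
      rw [revList, Function.update_self, hk]
      congr 1
      exact revList_congr fun j hj => Function.update_of_ne (by omega) _ _
    have hbd : ∀ t, HasDerivAt (G q (revList c r)) (if r = 0 then 0 else
        t ^ (c (r - 1) - 1) * G q (revList c (r - 1)) t) t := by
      intro t
      cases r with
      | zero => simpa [revList, G] using hasDerivAt_const t (1 : ℝ)
      | succ r => simpa [revList] using hasDerivAt_G_cons q (c r) (revList c r) t
    have hbd' : ∀ t, (t - q) * (if r = 0 then 0 else
        t ^ (c (r - 1) - 1) * G q (revList c (r - 1)) t) = boundaryTerm q c r t := by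
      intro t
      cases r with
      | zero => simp [boundaryTerm]
      | succ r => simp [boundaryTerm, mul_assoc]
    let D : ℝ → ℝ := fun t => (∑ j ∈ Finset.range (r + 1), (c j : ℝ)) * G q ((k + 1) :: revList c r) t -
        (q * (∑ j ∈ Finset.range r, ((c j : ℝ) - 1) *
          G q ((k + 1) :: revList (Function.update c j (c j - 1)) r) t
          + k * G q (k :: revList c r) t) + (t - q) * t ^ k * G q (revList c r) t)
    have hD : ∀ t, HasDerivAt D 0 t := by
      intro t
      have h1 := (hasDerivAt_G_cons q (k + 1) (revList c r) t).const_mul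
        (∑ j ∈ Finset.range (r + 1), (c j : ℝ))
      have h2 := HasDerivAt.fun_sum (u := Finset.range r) fun j _ =>
        (hasDerivAt_G_cons q (k + 1) (revList (Function.update c j (c j - 1)) r) t).const_mul
          ((c j : ℝ) - 1)
      have h3 := (hasDerivAt_G_cons q k (revList c r) t).const_mul (k : ℝ)
      have h4 := ((((hasDerivAt_id t).sub_const q).mul (hasDerivAt_pow k t)).mul (hbd t))
      refine (h1.sub (((h2.add h3).const_mul q).add h4)).congr_deriv ?_
      have ih' := ih t
      have hb := hbd' t
      have hs : ∑ j ∈ Finset.range r, ((c j : ℝ) - 1) *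
            (t ^ (k + 1 - 1) * G q (revList (Function.update c j (c j - 1)) r) t) =
          t ^ k * ∑ j ∈ Finset.range r, ((c j : ℝ) - 1) *
            G q (revList (Function.update c j (c j - 1)) r) t := by
        rw [Finset.mul_sum]
        exact Finset.sum_congr rfl fun j _ => by simp; ring
      rw [hs, Finset.sum_range_succ, hk]
      have hp : (k : ℝ) * t ^ k = k * t ^ (k - 1) * t := by
        cases k <;> simp [pow_succ, mul_assoc]
      simp only [id, Nat.add_sub_cancel, Pi.mul_apply]
      push_cast
      linear_combination t ^ k * ih' - t ^ k * hb + G q (revList c r) t * hp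
    have hconst := is_const_of_deriv_eq_zero (fun t => (hD t).differentiableAt)
      (fun t => (hD t).deriv) t q
    have hq : D q = 0 := by simp [D, G_cons_self]
    have := hconst.trans hq
    have hsplit : ∑ j ∈ Finset.range (r + 1), ((c j : ℝ) - 1) *
          G q (revList (Function.update c j (c j - 1)) (r + 1)) t =
        ∑ j ∈ Finset.range r, ((c j : ℝ) - 1) *
          G q ((k + 1) :: revList (Function.update c j (c j - 1)) r) t +
            k * G q (k :: revList c r) t := by
      rw [Finset.sum_range_succ, htop, hk]
      push_cast
      rw [add_sub_cancel_right]
      congr 1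
      exact Finset.sum_congr rfl fun j hj => by rw [hlow j hj t]
    rw [hsplit]
    simp only [boundaryTerm, hk, Nat.add_sub_cancel, D, revList] at this ⊢
    linear_combination this

end Analytic

section Combinatorial

open Classical in
/-- Fillings of the `n` slots of `A` by `1, …, n`, extended by zero outside `A`. -/
noncomputable def fillings : ℕ → Finset (ℕ × ℕ) → Finset (ℕ × ℕ → ℕ)
  | 0, _ => {0}
  | n + 1, A => A.biUnion fun a =>
      (fillings n (A.erase a)).image fun f => Function.update f a (n + 1)

lemma fillings_le : ∀ {n : ℕ} {A : Finset (ℕ × ℕ)} {f : ℕ × ℕ → ℕ}, f ∈ fillings n A →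
    ∀ a, f a ≤ n
  | 0, A, f, hf, a => by
    simp only [fillings, Finset.mem_singleton] at hf; simp [hf]
  | n + 1, A, f, hf, a => by
    simp only [fillings, Finset.mem_biUnion, Finset.mem_image] at hf
    obtain ⟨b, -, f', hf', rfl⟩ := hf
    have := fillings_le hf' a
    rw [Function.update_apply]
    split_ifs <;> omega

lemma fillings_eq_zero : ∀ {n : ℕ} {A : Finset (ℕ × ℕ)} {f : ℕ × ℕ → ℕ}, f ∈ fillings n A →
    ∀ a ∉ A, f a = 0
  | 0, A, f, hf, a, _ => by
    simp only [fillings, Finset.mem_singleton] at hf; simp [hf]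
  | n + 1, A, f, hf, a, ha => by
    simp only [fillings, Finset.mem_biUnion, Finset.mem_image] at hf
    obtain ⟨b, hb, f', hf', rfl⟩ := hf
    rw [Function.update_of_ne (by rintro rfl; exact ha hb)]
    exact fillings_eq_zero hf' a fun h => ha (Finset.mem_of_mem_erase h)

lemma mem_fillings : ∀ {n : ℕ} {A : Finset (ℕ × ℕ)} {f : ℕ × ℕ → ℕ}, A.card = n →
    (f ∈ fillings n A ↔ (∀ a ∉ A, f a = 0) ∧ A.image f = Finset.Icc 1 n)
  | 0, A, f, hA => by
    rw [Finset.card_eq_zero] at hA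
    subst hA
    simp [fillings, funext_iff]
  | n + 1, A, f, hA => by
    constructor
    · intro hf
      refine ⟨fillings_eq_zero hf, ?_⟩
      simp only [fillings, Finset.mem_biUnion, Finset.mem_image] at hf
      obtain ⟨a, ha, f', hf', rfl⟩ := hf
      rw [mem_fillings (by rw [Finset.card_erase_of_mem ha, hA]; rfl)] at hf'
      have hcongr : (A.erase a).image (Function.update f' a (n + 1)) = Finset.Icc 1 n := by
        rw [← hf'.2]
        exact Finset.image_congr fun b hb =>
          Function.update_of_ne (Finset.ne_of_mem_erase hb) _ _
      rw [← Finset.insert_erase ha, Finset.image_insert, hcongr, Function.update_self]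
      ext x
      simp only [Finset.mem_insert, Finset.mem_Icc]
      omega
    · rintro ⟨h0, him⟩
      obtain ⟨a, ha, hfa⟩ : ∃ a ∈ A, f a = n + 1 := by
        rw [← Finset.mem_image, him]; simp
      have hinj : Set.InjOn f A := by
        rw [← Finset.card_image_iff, him, hA]; simp
      simp only [fillings, Finset.mem_biUnion, Finset.mem_image]
      refine ⟨a, ha, Function.update f a 0, ?_, by simp [← hfa]⟩
      rw [mem_fillings (by rw [Finset.card_erase_of_mem ha, hA]; rfl)]
      constructor
      · intro b hb
        rw [Function.update_apply]
        split_ifs with h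
        · rfl
        · exact h0 b fun hbA => hb (Finset.mem_erase.2 ⟨h, hbA⟩)
      · rw [Finset.image_congr (g := f) fun b hb =>
          Function.update_of_ne (Finset.ne_of_mem_erase hb) _ _]
        ext x
        have hx : x ∈ A.image f ↔ x ∈ Finset.Icc 1 (n + 1) := by rw [him]
        simp only [Finset.mem_image, Finset.mem_Icc, Finset.mem_erase] at hx ⊢
        constructor
        · rintro ⟨b, ⟨hba, hb⟩, rfl⟩
          have h1 := hx.1 ⟨b, hb, rfl⟩
          have h2 : f b ≠ n + 1 := fun h => hba (hinj hb ha (h.trans hfa.symm))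
          omega
        · intro h
          obtain ⟨b, hb, rfl⟩ := hx.2 (by omega)
          exact ⟨b, ⟨by rintro rfl; omega, hb⟩, rfl⟩

lemma sum_fillings_succ {M : Type*} [AddCommMonoid M] (n : ℕ) (A : Finset (ℕ × ℕ))
    (F : (ℕ × ℕ → ℕ) → M) :
    ∑ f ∈ fillings (n + 1) A, F f =
      ∑ a ∈ A, ∑ f ∈ fillings n (A.erase a), F (Function.update f a (n + 1)) := by
  classical
  have hdisj : (A : Set (ℕ × ℕ)).PairwiseDisjoint fun a =>
      (fillings n (A.erase a)).image fun f => Function.update f a (n + 1) := by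
    intro a _ b _ hab
    rw [Function.onFun, Finset.disjoint_left]
    intro f hf hf'
    obtain ⟨f₁, _, rfl⟩ := Finset.mem_image.1 hf
    obtain ⟨f₂, h₂, h⟩ := Finset.mem_image.1 hf'
    have h' := congrFun h a
    rw [Function.update_of_ne hab, Function.update_self] at h'
    have := fillings_le h₂ a
    omega
  rw [fillings]
  rw [show (fun a b => Classical.propDecidable (a = b)) =
    (fun a b : ℕ × ℕ → ℕ => (inferInstance : Decidable (a = b))) from Subsingleton.elim _ _]
  rw [Finset.sum_biUnion hdisj]
  refine Finset.sum_congr rfl fun a _ => Finset.sum_image fun f hf f' hf' h => ?_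
  have key : ∀ f ∈ fillings n (A.erase a),
      f = Function.update (Function.update f a (n + 1)) a 0 := fun f hf => by
    rw [Function.update_idem, ← fillings_eq_zero hf a (Finset.notMem_erase a A),
      Function.update_eq_self]
  rw [key f hf, key f' hf']
  exact congrArg (fun u => Function.update u a 0) h

/-- The slots carrying a letter larger than the letter of the last slot `(j, 0)` of their
block `j`. -/
def exceedances (A : Finset (ℕ × ℕ)) (f : ℕ × ℕ → ℕ) : Finset (ℕ × ℕ) :=
  A.filter fun a => (a.1, 0) ∈ A ∧ f (a.1, 0) < f a

/-- The letters of the last slots increase with the block. -/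
def LastsIncreasing (A : Finset (ℕ × ℕ)) (f : ℕ × ℕ → ℕ) : Prop :=
  ∀ i j, (i, 0) ∈ A → (j, 0) ∈ A → i < j → f (i, 0) < f (j, 0)

open Classical in
/-- The contribution of a filling to the generating function. -/
noncomputable def weight (q : ℝ) (A : Finset (ℕ × ℕ)) (f : ℕ × ℕ → ℕ) : ℝ :=
  if LastsIncreasing A f then q ^ (exceedances A f).card else 0

lemma weight_update_of_ne_zero (q : ℝ) {n : ℕ} {A : Finset (ℕ × ℕ)} {f : ℕ × ℕ → ℕ}
    {j k : ℕ} (hk : k ≠ 0) (ha : (j, k) ∈ A) (hf : f ∈ fillings n (A.erase (j, k))) :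
    weight q A (Function.update f (j, k) (n + 1)) =
      (if (j, 0) ∈ A then q else 1) * weight q (A.erase (j, k)) f := by
  have hmem : ∀ i, (i, 0) ∈ A.erase (j, k) ↔ (i, 0) ∈ A := by
    intro i; simp [Ne.symm hk]
  have hup : ∀ i, Function.update f (j, k) (n + 1) (i, 0) = f (i, 0) := by
    intro i; exact Function.update_of_ne (by simp [Ne.symm hk]) _ _
  have hinc : LastsIncreasing A (Function.update f (j, k) (n + 1)) ↔
      LastsIncreasing (A.erase (j, k)) f := by
    simp only [LastsIncreasing, hmem, hup]
  have hle := fillings_le hf (j, 0)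
  have hexc : exceedances A (Function.update f (j, k) (n + 1)) =
      if (j, 0) ∈ A then insert (j, k) (exceedances (A.erase (j, k)) f)
      else exceedances (A.erase (j, k)) f := by
    ext b
    by_cases hb : b = (j, k)
    · subst hb
      split_ifs with h
      · simp [exceedances, hup, ha, h]; omega
      · simp [exceedances, h]
    · have : b ∈ exceedances A (Function.update f (j, k) (n + 1)) ↔
          b ∈ exceedances (A.erase (j, k)) f := by
        simp only [exceedances, Finset.mem_filter, hmem, hup, Function.update_of_ne hb,
          Finset.mem_erase, ne_eq, hb, not_false_eq_true, true_and]
      split_ifs <;> simp [this, hb]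
  have hnot : (j, k) ∉ exceedances (A.erase (j, k)) f := by simp [exceedances]
  unfold weight
  rw [hexc]
  by_cases h : LastsIncreasing (A.erase (j, k)) f
  · rw [if_pos h, if_pos (hinc.2 h)]
    split_ifs
    · rw [Finset.card_insert_of_notMem hnot, pow_succ, mul_comm]
    · rw [one_mul]
  · rw [if_neg h, if_neg (mt hinc.1 h), mul_zero]

lemma weight_update_zero_of_not_last (q : ℝ) {n : ℕ} {A : Finset (ℕ × ℕ)} {f : ℕ × ℕ → ℕ}
    {j i : ℕ} (ha : (j, 0) ∈ A) (hi : (i, 0) ∈ A) (hji : j < i)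
    (hf : f ∈ fillings n (A.erase (j, 0))) :
    weight q A (Function.update f (j, 0) (n + 1)) = 0 := by
  refine if_neg fun h => ?_
  have := h j i ha hi hji
  rw [Function.update_self, Function.update_of_ne (by simp; omega)] at this
  have := fillings_le hf (i, 0)
  omega

lemma weight_update_zero_of_last (q : ℝ) {n : ℕ} {A : Finset (ℕ × ℕ)} {f : ℕ × ℕ → ℕ}
    {j : ℕ} (ha : (j, 0) ∈ A) (hlast : ∀ i, (i, 0) ∈ A → i ≤ j)
    (hf : f ∈ fillings n (A.erase (j, 0))) :
    weight q A (Function.update f (j, 0) (n + 1)) = weight q (A.erase (j, 0)) f := by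
  have hup : ∀ i, i ≠ j → Function.update f (j, 0) (n + 1) (i, 0) = f (i, 0) := by
    intro i hi; exact Function.update_of_ne (by simpa using hi) _ _
  have hinc : LastsIncreasing A (Function.update f (j, 0) (n + 1)) ↔
      LastsIncreasing (A.erase (j, 0)) f := by
    constructor
    · intro h i i' hi hi' hlt
      simp only [Finset.mem_erase, ne_eq, Prod.mk.injEq, and_true] at hi hi'
      have := h i i' hi.2 hi'.2 hlt
      rwa [hup i hi.1, hup i' hi'.1] at this
    · intro h i i' hi hi' hlt
      have h1 := hlast i' hi'
      have hij : i ≠ j := by omega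
      rw [hup i hij]
      by_cases hi'j : i' = j
      · subst hi'j
        rw [Function.update_self]
        have := fillings_le hf (i, 0)
        omega
      · rw [hup i' hi'j]
        exact h i i' (by simp [hi, hij]) (by simp [hi', hi'j]) hlt
  have hexc : exceedances A (Function.update f (j, 0) (n + 1)) =
      exceedances (A.erase (j, 0)) f := by
    ext ⟨i, k⟩
    by_cases hij : i = j
    · subst hij
      have : Function.update f (i, 0) (n + 1) (i, k) ≤ n + 1 := by
        rw [Function.update_apply]
        have := fillings_le hf (i, k)
        split_ifs <;> omega
      simp [exceedances]
      omega
    · simp [exceedances, hij, Function.update_apply]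
  unfold weight
  rw [hexc]
  by_cases h : LastsIncreasing (A.erase (j, 0)) f
  · rw [if_pos h, if_pos (hinc.2 h)]
  · rw [if_neg h, if_neg (mt hinc.1 h)]

/-- The number of slots of `A` in block `j`. -/
def blockCard (A : Finset (ℕ × ℕ)) (j : ℕ) : ℕ := (A.filter fun a => a.1 = j).card

lemma blockCard_erase (A : Finset (ℕ × ℕ)) {a : ℕ × ℕ} (ha : a ∈ A) :
    blockCard (A.erase a) = Function.update (blockCard A) a.1 (blockCard A a.1 - 1) := by
  funext j
  unfold blockCard
  rw [Finset.filter_erase, Function.update_apply]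
  split_ifs with h
  · subst h
    rw [Finset.card_erase_of_mem (by simp [ha])]
  · rw [Finset.erase_eq_of_notMem (by simp [Ne.symm h])]

/-- The lasts of `A` are those of the blocks `0, …, r - 1`. -/
def HasLasts (A : Finset (ℕ × ℕ)) (r : ℕ) : Prop := ∀ j, (j, 0) ∈ A ↔ j < r

lemma HasLasts.blockCard_pos {A : Finset (ℕ × ℕ)} {r : ℕ} (h : HasLasts A r) {j : ℕ}
    (hj : j < r) : 0 < blockCard A j :=
  Finset.card_pos.2 ⟨(j, 0), by simp [(h j).2 hj]⟩

lemma card_eq_sum_blockCard_add (A : Finset (ℕ × ℕ)) (r : ℕ) :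
    A.card = ∑ j ∈ Finset.range r, blockCard A j + (A.filter fun a => ¬ a.1 < r).card := by
  rw [← Finset.card_filter_add_card_filter_not (s := A) (fun a => a.1 < r)]
  congr 1
  rw [Finset.card_eq_sum_card_fiberwise (f := Prod.fst) (t := Finset.range r)
    (fun a ha => by simpa using (Finset.mem_filter.1 ha).2)]
  refine Finset.sum_congr rfl fun j hj => ?_
  rw [blockCard, Finset.filter_filter]
  congr 1
  ext a
  have := Finset.mem_range.1 hj
  simp only [Finset.mem_filter]
  grind

lemma HasLasts.sum_eq {A : Finset (ℕ × ℕ)} {r : ℕ} (h : HasLasts A r) (x : ℝ)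
    (F K : ℕ → ℝ) :
    ∑ a ∈ A, (if a.1 < r then if a.2 = 0 then K a.1 else F a.1 else x) =
      ∑ j ∈ Finset.range r, K j + ∑ j ∈ Finset.range r, ((blockCard A j : ℝ) - 1) * F j +
        (A.filter fun a => ¬ a.1 < r).card * x := by
  rw [Finset.sum_ite, Finset.sum_const, nsmul_eq_mul]
  congr 1
  rw [← Finset.sum_fiberwise_of_maps_to (g := Prod.fst) (t := Finset.range r)
    (fun a ha => by simpa using (Finset.mem_filter.1 ha).2), ← Finset.sum_add_distrib]
  refine Finset.sum_congr rfl fun j hj => ?_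
  have hjr := Finset.mem_range.1 hj
  have hmem : (j, 0) ∈ A.filter fun a => a.1 = j := by simp [(h j).2 hjr]
  have hfil : (A.filter fun a => a.1 < r).filter (fun a => a.1 = j) =
      A.filter fun a => a.1 = j := by
    ext a; simp only [Finset.mem_filter]; grind
  rw [hfil, ← Finset.add_sum_erase _ _ hmem]
  simp only [if_true]
  congr 1
  rw [Finset.sum_congr rfl (g := fun _ => F j), Finset.sum_const, nsmul_eq_mul,
    Finset.card_erase_of_mem hmem, Nat.cast_sub (Finset.card_pos.2 ⟨_, hmem⟩), blockCard,
    Nat.cast_one]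
  rintro ⟨i, k⟩ ha
  simp only [Finset.mem_erase, Finset.mem_filter, ne_eq, Prod.mk.injEq] at ha
  rw [if_neg (by grind), ha.2.2]

/-- The generating function of fillings of an arbitrary set of slots. -/
theorem pow_mul_sum_weight (q : ℝ) : ∀ (n : ℕ) (A : Finset (ℕ × ℕ)) (r : ℕ), A.card = n →
    HasLasts A r → (1 - q) ^ r * ∑ f ∈ fillings n A, weight q A f =
      n.factorial * G q (revList (blockCard A) r) 1
  | 0, A, r, hA, hr => by
    rw [Finset.card_eq_zero] at hA
    subst hA
    obtain rfl : r = 0 := by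
      by_contra h
      exact absurd ((hr 0).2 (Nat.pos_of_ne_zero h)) (by simp)
    simp [fillings, weight, LastsIncreasing, exceedances, revList, G]
  | n + 1, A, r, hA, hr => by
    have hcard : ∀ a ∈ A, (A.erase a).card = n := fun a ha => by
      rw [Finset.card_erase_of_mem ha, hA]; rfl
    have hterm : ∀ a ∈ A, (1 - q) ^ r * ∑ f ∈ fillings n (A.erase a),
        weight q A (Function.update f a (n + 1)) = n.factorial *
          (if a.1 < r then
            if a.2 = 0 then
              if a.1 + 1 = r then (1 - q) * G q (revList (blockCard A) a.1) 1 else 0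
            else q * G q (revList (Function.update (blockCard A) a.1 (blockCard A a.1 - 1)) r) 1
          else G q (revList (blockCard A) r) 1) := by
      rintro ⟨j, k⟩ ha
      have hc := blockCard_erase A ha
      by_cases hk : k = 0
      · subst hk
        have hjr := (hr j).1 ha
        simp only [hjr, if_true]
        split_ifs with hj
        · subst hj
          rw [Finset.sum_congr rfl fun f hf => weight_update_zero_of_last q ha
            (fun i hi => by have := (hr i).1 hi; omega) hf, pow_succ]
          have ih := pow_mul_sum_weight q n (A.erase (j, 0)) j (hcard _ ha) (fun i => by
            simp only [Finset.mem_erase, hr i]; grind)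
          have hrev : revList (blockCard (A.erase (j, 0))) j = revList (blockCard A) j := by
            rw [hc]
            exact revList_congr fun i hi => Function.update_of_ne (by simp; omega) _ _
          rw [hrev] at ih
          linear_combination (1 - q) * ih
        · rw [Finset.sum_congr rfl fun f hf => weight_update_zero_of_not_last q ha
            ((hr (j + 1)).2 (by omega)) (by omega) hf]
          simp
      · rw [Finset.sum_congr rfl fun f hf => weight_update_of_ne_zero q hk ha hf,
          ← Finset.mul_sum]
        have ih := pow_mul_sum_weight q n (A.erase (j, k)) r (hcard _ ha) (fun i => by
            rw [← hr i]; simp [Ne.symm hk])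
        rw [hc] at ih
        simp only [hr j, hk, if_false] at ih ⊢
        split_ifs with hj
        · linear_combination q * ih
        · have hrev : revList (Function.update (blockCard A) j (blockCard A j - 1)) r =
              revList (blockCard A) r :=
            revList_congr fun i hi => Function.update_of_ne (by omega) _ _
          rw [hrev] at ih
          linear_combination ih
    have heuler := sum_mul_G_revList q (blockCard A) r (fun j hj => hr.blockCard_pos hj) 1
    have hbd : ∑ j ∈ Finset.range r,
        (if j + 1 = r then (1 - q) * G q (revList (blockCard A) j) 1 else 0) =
          boundaryTerm q (blockCard A) r 1 := by
      cases r with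
      | zero => simp [boundaryTerm]
      | succ r => simp [boundaryTerm]
    have hc : ((n + 1 : ℕ) : ℝ) = ∑ j ∈ Finset.range r, (blockCard A j : ℝ) +
        (A.filter fun a => ¬ a.1 < r).card := by
      rw [← hA, card_eq_sum_blockCard_add A r]; push_cast; rfl
    rw [sum_fillings_succ, Finset.mul_sum, Finset.sum_congr rfl hterm, ← Finset.mul_sum,
      hr.sum_eq (G q (revList (blockCard A) r) 1)
        (fun j => q * G q (revList (Function.update (blockCard A) j (blockCard A j - 1)) r) 1)
        (fun j => if j + 1 = r then (1 - q) * G q (revList (blockCard A) j) 1 else 0),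
      hbd, Nat.factorial_succ, Nat.cast_mul, hc, mul_comm _ (n.factorial : ℝ), mul_assoc, add_mul,
      heuler, Finset.mul_sum]
    congr 1
    simp only [mul_left_comm q]
    ring

end Combinatorial

section Encoding

/-- The slots of a composition: `(j, k)` is the `k`-th position from the end in block `j`. -/
def slots (I : List ℕ) : Finset (ℕ × ℕ) :=
  (Finset.range I.length).biUnion fun j => (Finset.range (I.getD j 0)).image (Prod.mk j)

lemma mem_slots {I : List ℕ} {j k : ℕ} : (j, k) ∈ slots I ↔ k < I.getD j 0 := by
  simp only [slots, Finset.mem_biUnion, Finset.mem_range, Finset.mem_image, Prod.mk.injEq]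
  constructor
  · rintro ⟨j, _, k, hk, rfl, rfl⟩
    exact hk
  · intro h
    refine ⟨j, ?_, k, h, rfl, rfl⟩
    by_contra hj
    rw [List.getD_eq_default _ _ (by omega)] at h
    omega

lemma blockCard_slots (I : List ℕ) (j : ℕ) : blockCard (slots I) j = I.getD j 0 := by
  have : ((slots I).filter fun a => a.1 = j) = (Finset.range (I.getD j 0)).image (Prod.mk j) := by
    ext ⟨i, k⟩
    simp only [Finset.mem_filter, mem_slots, Finset.mem_image, Finset.mem_range, Prod.mk.injEq]
    constructor
    · rintro ⟨h, rfl⟩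
      exact ⟨k, h, rfl, rfl⟩
    · rintro ⟨k, h, rfl, rfl⟩
      exact ⟨h, rfl⟩
  rw [blockCard, this, Finset.card_image_of_injective _ (Prod.mk_right_injective j),
    Finset.card_range]

lemma map_range_getD {α : Type*} (l : List α) (d : α) :
    (List.range l.length).map (fun j => l.getD j d) = l := by
  refine List.ext_getElem (by simp) fun i h₁ h₂ => ?_
  simp [h₂]

lemma revList_blockCard_slots (I : List ℕ) :
    revList (blockCard (slots I)) I.length = I.reverse := by
  rw [revList_eq, funext (blockCard_slots I), map_range_getD]

lemma lt_length_of_mem_slots {I : List ℕ} {a : ℕ × ℕ} (ha : a ∈ slots I) : a.1 < I.length := by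
  obtain ⟨j, k⟩ := a
  by_contra h
  rw [mem_slots, List.getD_eq_default _ _ (by simpa using h)] at ha
  omega

lemma sum_range_getD {α : Type*} (l : List α) (d : α) (F : α → ℕ) :
    ∑ j ∈ Finset.range l.length, F (l.getD j d) = (l.map F).sum := by
  conv_rhs => rw [← map_range_getD l d, List.map_map]
  rfl

lemma card_slots (I : List ℕ) : (slots I).card = I.sum := by
  rw [card_eq_sum_blockCard_add _ I.length, Finset.filter_false_of_mem
    (fun a ha => not_not.2 (lt_length_of_mem_slots ha)), Finset.card_empty, add_zero,
    funext (blockCard_slots I)]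
  simpa using sum_range_getD I 0 id

lemma hasLasts_slots {I : List ℕ} (hpos : ∀ i ∈ I, 0 < i) : HasLasts (slots I) I.length := by
  intro j
  refine ⟨lt_length_of_mem_slots, fun h => ?_⟩
  rw [mem_slots, List.getD_eq_getElem _ _ h]
  exact hpos _ (List.getElem_mem h)

/-- The filling of the slots by the letters of a list of blocks. -/
def toFilling (L : List (List ℕ)) (a : ℕ × ℕ) : ℕ := (L.getD a.1 []).reverse.getD a.2 0

/-- The list of blocks of shape `I` with prescribed letters in its slots. -/
def ofFilling (I : List ℕ) (f : ℕ × ℕ → ℕ) : List (List ℕ) :=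
  (List.range I.length).map fun j => ((List.range (I.getD j 0)).map fun k => f (j, k)).reverse

lemma shape_ofFilling (I : List ℕ) (f : ℕ × ℕ → ℕ) : shape (ofFilling I f) = I := by
  simp only [shape, ofFilling, List.map_map, Function.comp_def, List.length_reverse,
    List.length_map, List.length_range]
  exact map_range_getD I 0

lemma getD_shape (L : List (List ℕ)) (j : ℕ) : (shape L).getD j 0 = (L.getD j []).length := by
  rw [shape, ← List.length_nil (α := ℕ), List.getD_map]

lemma toFilling_ofFilling {I : List ℕ} {f : ℕ × ℕ → ℕ} (hf : ∀ a ∉ slots I, f a = 0) :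
    toFilling (ofFilling I f) = f := by
  funext ⟨j, k⟩
  by_cases h : (j, k) ∈ slots I
  · have hj := lt_length_of_mem_slots h
    rw [mem_slots] at h
    have hblock : (ofFilling I f).getD j [] =
        ((List.range (I.getD j 0)).map fun k => f (j, k)).reverse := by
      rw [ofFilling, List.getD_eq_getElem _ _ (by simpa using hj)]
      simp only [List.getElem_map, List.getElem_range]
    simp only [toFilling]
    rw [hblock, List.reverse_reverse, List.getD_eq_getElem _ _ (by simpa using h)]
    simp
  · rw [hf _ h]
    rw [mem_slots, ← shape_ofFilling I f, getD_shape] at h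
    exact List.getD_eq_default _ _ (by simpa using h)

lemma ofFilling_toFilling (L : List (List ℕ)) : ofFilling (shape L) (toFilling L) = L := by
  have : ∀ j, ((List.range ((shape L).getD j 0)).map fun k => toFilling L (j, k)).reverse =
      L.getD j [] := by
    intro j
    rw [getD_shape, ← List.length_reverse, List.reverse_eq_iff]
    exact map_range_getD (L.getD j []).reverse 0
  simp only [ofFilling, this]
  rw [shape, List.length_map]
  exact map_range_getD L []

lemma toFilling_eq_zero (L : List (List ℕ)) : ∀ a ∉ slots (shape L), toFilling L a = 0 := by
  rintro ⟨j, k⟩ h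
  rw [mem_slots, getD_shape] at h
  exact List.getD_eq_default _ _ (by simpa using h)

lemma image_toFilling (L : List (List ℕ)) :
    (slots (shape L)).image (toFilling L) = L.flatten.toFinset := by
  ext x
  simp only [Finset.mem_image, List.mem_toFinset, List.mem_flatten]
  constructor
  · rintro ⟨⟨j, k⟩, h, rfl⟩
    have hj := lt_length_of_mem_slots h
    rw [shape, List.length_map] at hj
    rw [mem_slots, getD_shape] at h
    refine ⟨L.getD j [], ?_, ?_⟩
    · rw [List.getD_eq_getElem _ _ hj]
      exact List.getElem_mem hj
    · have h' : k < (L.getD j []).reverse.length := by rwa [List.length_reverse]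
      rw [toFilling, List.getD_eq_getElem _ _ h', ← List.mem_reverse]
      exact List.getElem_mem _
  · rintro ⟨B, hB, hx⟩
    obtain ⟨j, hj, rfl⟩ := List.mem_iff_getElem.1 hB
    obtain ⟨k, hk, rfl⟩ := List.mem_iff_getElem.1 (List.mem_reverse.2 hx)
    refine ⟨(j, k), ?_, ?_⟩
    · rw [mem_slots, getD_shape, List.getD_eq_getElem _ _ hj]
      simpa using hk
    · rw [toFilling]
      simp only [List.getD_eq_getElem _ _ hj]
      rw [List.getD_eq_getElem _ _ hk]

lemma toFilling_zero (L : List (List ℕ)) (j : ℕ) :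
    toFilling L (j, 0) = (L.getD j []).getLastD 0 := by
  simp only [toFilling]
  rcases List.eq_nil_or_concat (L.getD j []) with h | ⟨B, b, h⟩ <;> rw [h] <;> simp

lemma chain_lasts_iff {L : List (List ℕ)} (hpos : ∀ i ∈ shape L, 0 < i) :
    List.IsChain (· < ·) (L.map fun B => B.getLastD 0) ↔
      LastsIncreasing (slots (shape L)) (toFilling L) := by
  have hlast := hasLasts_slots hpos
  have hlen : (shape L).length = L.length := by simp [shape]
  rw [List.isChain_iff_pairwise, List.pairwise_iff_getElem]
  simp only [LastsIncreasing, hlast _, hlen, toFilling_zero, List.length_map, List.getElem_map]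
  constructor
  · intro h i j hi hj hij
    rw [List.getD_eq_getElem _ _ hi, List.getD_eq_getElem _ _ hj]
    exact h i j hi hj hij
  · intro h i j hi hj hij
    have := h i j hi hj hij
    rwa [List.getD_eq_getElem _ _ hi, List.getD_eq_getElem _ _ hj] at this

lemma isPermutition_iff {n : ℕ} {L : List (List ℕ)} (hpos : ∀ i ∈ shape L, 0 < i)
    (hsum : (shape L).sum = n) :
    IsPermutition n L ↔ toFilling L ∈ fillings n (slots (shape L)) ∧
      LastsIncreasing (slots (shape L)) (toFilling L) := by
  have hlen : L.flatten.length = n := by rw [List.length_flatten]; exact hsum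
  have hset : L.flatten.toFinset = Finset.Icc 1 n ↔ ∀ x, x ∈ L.flatten ↔ 1 ≤ x ∧ x ≤ n := by
    simp only [Finset.ext_iff, List.mem_toFinset, Finset.mem_Icc]
  rw [mem_fillings (by rw [card_slots, hsum]), image_toFilling, hset, ← chain_lasts_iff hpos]
  constructor
  · rintro ⟨-, -, h, hc⟩
    exact ⟨⟨toFilling_eq_zero L, h⟩, hc⟩
  · rintro ⟨⟨-, h⟩, hc⟩
    refine ⟨fun B hB => ?_, ?_, h, hc⟩
    · exact List.ne_nil_of_length_pos (hpos _ (List.mem_map_of_mem hB))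
    · rw [← List.dedup_eq_self, ← (List.dedup_sublist _).length_eq, ← List.card_toFinset,
        hset.2 h, hlen]
      simp

lemma countP_eq_card (B : List ℕ) (p : ℕ → Prop) [DecidablePred p] :
    B.countP (fun x => decide (p x)) =
      ((Finset.range B.length).filter fun k => p (B.getD k 0)).card := by
  conv_lhs => rw [← map_range_getD B 0, List.countP_map, List.countP_eq_length_filter]
  rfl

lemma sinv_eq_card (L : List (List ℕ)) :
    sinv L = (exceedances (slots (shape L)) (toFilling L)).card := by
  rw [sinv, ← sum_range_getD L [], Finset.card_eq_sum_card_fiberwise (f := Prod.fst)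
    (t := Finset.range L.length)]
  · refine Finset.sum_congr rfl fun j hj => ?_
    rw [← List.countP_reverse, countP_eq_card,
      ← Finset.card_image_of_injective _ (Prod.mk_right_injective j)]
    congr 1
    ext ⟨i, k⟩
    simp only [exceedances, Finset.mem_image, Finset.mem_filter, mem_slots, getD_shape,
      Finset.mem_range, List.length_reverse, Prod.mk.injEq, toFilling_zero]
    constructor
    · rintro ⟨k, ⟨hk, h⟩, rfl, rfl⟩
      exact ⟨⟨hk, by omega, h⟩, rfl⟩
    · rintro ⟨⟨hk, -, h⟩, rfl⟩
      exact ⟨k, ⟨hk, h⟩, rfl, rfl⟩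
  · intro a ha
    have := lt_length_of_mem_slots (Finset.mem_filter.1 ha).1
    simpa [shape] using this

open Classical in
lemma finsum_permutition_eq {n : ℕ} {I : List ℕ} (hpos : ∀ i ∈ I, 0 < i) (hsum : I.sum = n)
    (q : ℝ) :
    ∑ᶠ L ∈ {L : List (List ℕ) | IsPermutition n L ∧ shape L = I}, q ^ sinv L =
      ∑ f ∈ fillings n (slots I), weight q (slots I) f := by
  simp only [weight]
  rw [← Finset.sum_filter, ← finsum_mem_coe_finset]
  refine finsum_mem_eq_of_bijOn toFilling ⟨?_, ?_, ?_⟩ ?_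
  · rintro L ⟨hL, rfl⟩
    simpa using (isPermutition_iff hpos hsum).1 hL
  · rintro L ⟨-, hL⟩ L' ⟨-, hL'⟩ h
    rw [← ofFilling_toFilling L, ← ofFilling_toFilling L', hL, hL', h]
  · intro f hf
    have hf' : f ∈ fillings n (slots I) ∧ LastsIncreasing (slots I) f := by simpa using hf
    have hto := toFilling_ofFilling (fillings_eq_zero hf'.1)
    have hshape := shape_ofFilling I f
    refine ⟨ofFilling I f, ⟨?_, hshape⟩, hto⟩
    rw [isPermutition_iff (by rwa [hshape]) (by rwa [hshape]), hshape, hto]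
    exact hf'
  · rintro L ⟨-, rfl⟩
    rw [sinv_eq_card]

end Encoding

/-- for every composition `I` of `n` and real `q`,
`n! · g_I(q) = (1−q)^{ℓ(I)} · Σ_{c(π)=I} q^{sinv(π)}`. -/
theorem reduced_composition_polynomial_generating_function
    (n : ℕ) (hn : 0 < n) (I : List ℕ) (hpos : ∀ i ∈ I, 0 < i) (hsum : I.sum = n) (q : ℝ) :
    (Nat.factorial n : ℝ) * g q I =
      (1 - q) ^ I.length *
        ∑ᶠ L ∈ {L : List (List ℕ) | IsPermutition n L ∧ shape L = I}, q ^ sinv L := by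
  rw [finsum_permutition_eq hpos hsum, pow_mul_sum_weight q n (slots I) I.length
    (by rw [card_slots, hsum]) (hasLasts_slots hpos), revList_blockCard_slots, g]
end

section
/- For every positive integer n and every real number q, Σ_I n! · g_I(q)/(1−q)^{ℓ(I)} = Σ_π q^{sinv(π)}, where the first sum ranges over all compositions I of n and the second over all permutitions π of size n. In particular, at q = 1, Σ_I P_I(1) equals the total number of permutitions of size n. -/
section
open Polynomial

theorem exists_antiderivative {R : Type*} [CommRing R] [Algebra ℚ R] (p : R[X]) :
    ∃ r : R[X], derivative r = p ∧ r.eval 0 = 0 := by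
  induction p using Polynomial.induction_on' with
  | add p₁ p₂ h₁ h₂ =>
    obtain ⟨r₁, h₁, h₁'⟩ := h₁
    obtain ⟨r₂, h₂, h₂'⟩ := h₂
    exact ⟨r₁ + r₂, by simp [h₁, h₂], by simp [h₁', h₂']⟩
  | monomial n a =>
    refine ⟨monomial (n + 1) (algebraMap ℚ R (1 / (n + 1)) * a), ?_, by simp [eval_monomial]⟩
    rw [derivative_monomial]
    congr 1
    have h : algebraMap ℚ R (1 / (n + 1)) * ((n + 1 : ℕ) : R) = 1 := by
      rw [← map_natCast (algebraMap ℚ R), ← map_mul, ← map_one (algebraMap ℚ R)]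
      congr 1
      push_cast
      field_simp
    calc _ = (algebraMap ℚ R (1 / (n + 1)) * ((n + 1 : ℕ) : R)) * a := by push_cast; ring
      _ = a := by rw [h, one_mul]

/-- An antiderivative of `p` that vanishes at `0`. -/
noncomputable def antiderivative {R : Type*} [CommRing R] [Algebra ℚ R] (p : R[X]) : R[X] :=
  (exists_antiderivative p).choose

section antiderivative

variable {R : Type*} [CommRing R] [Algebra ℚ R] (p : R[X])

@[simp] theorem derivative_antiderivative : derivative (antiderivative p) = p :=
  (exists_antiderivative p).choose_spec.1

@[simp] theorem eval_zero_antiderivative : (antiderivative p).eval 0 = 0 :=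
  (exists_antiderivative p).choose_spec.2

end antiderivative

/-- The segment `q + (1 - q) u` from `q` to `1`, as a polynomial in `u` over `ℝ[q]`. -/
noncomputable def segmentPoly : ℝ[X][X] := C X + (1 - C X) * X

/-- `G q J (q + (1 - q) u)` divided by `(1 - q) ^ ℓ(J)`, as a polynomial in `u` over `ℝ[q]`. -/
noncomputable def reducedG : List ℕ → ℝ[X][X]
  | [] => 1
  | i :: J => antiderivative (segmentPoly ^ (i - 1) * reducedG J)

theorem G_segment (q : ℝ) (J : List ℕ) (u : ℝ) :
    G q J (q + (1 - q) * u) =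
      (1 - q) ^ J.length * ((reducedG J).map (evalRingHom q)).eval u := by
  induction J generalizing u with
  | nil => simp [G, reducedG]
  | cons i J ih =>
    set r := (reducedG (i :: J)).map (evalRingHom q) with hr
    have hder : derivative r =
        (C q + (1 - C q) * X) ^ (i - 1) * (reducedG J).map (evalRingHom q) := by
      rw [hr, derivative_map, reducedG, derivative_antiderivative]
      simp [segmentPoly]
    have hzero : r.eval 0 = 0 := by
      rw [hr, ← map_zero (evalRingHom q), eval_map_apply, reducedG, eval_zero_antiderivative,
        map_zero]
    have hint : ∫ v in (0 : ℝ)..u, (derivative r).eval v = r.eval u := by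
      rw [intervalIntegral.integral_eq_sub_of_hasDerivAt (fun v _ => r.hasDerivAt v)
        ((derivative r).continuous.intervalIntegrable _ _), hzero, sub_zero]
    have hsub := intervalIntegral.smul_integral_comp_add_mul (a := (0 : ℝ)) (b := u)
      (fun s => s ^ (i - 1) * G q J s) (1 - q) q
    rw [mul_zero, add_zero] at hsub
    rw [G, ← hsub, ← hint, List.length_cons, pow_succ', mul_assoc, smul_eq_mul,
      ← intervalIntegral.integral_const_mul ((1 - q) ^ J.length)]
    congr 1
    refine intervalIntegral.integral_congr fun v _ => ?_
    rw [ih, hder]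
    simp
    ring

theorem g_eq (q : ℝ) (I : List ℕ) :
    g q I = (1 - q) ^ I.length * ((reducedG I.reverse).eval 1).eval q := by
  have h := G_segment q I.reverse 1
  rw [mul_one, add_sub_cancel, List.length_reverse] at h
  rw [g, h, ← map_one (evalRingHom q), eval_map_apply, coe_evalRingHom]

/-- The lists of positive integers with sum `n`. -/
def compositionLists : ℕ → Finset (List ℕ)
  | 0 => {[]}
  | n + 1 => Finset.univ.biUnion fun i : Fin (n + 1) =>
      (compositionLists (n - i)).image (List.cons (i + 1))

theorem mem_compositionLists {n : ℕ} {I : List ℕ} :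
    I ∈ compositionLists n ↔ (∀ i ∈ I, 0 < i) ∧ I.sum = n := by
  induction I generalizing n with
  | nil => cases n <;> simp [compositionLists]
  | cons i I ih =>
    cases n with
    | zero =>
      simp [compositionLists]
      omega
    | succ n =>
      simp only [compositionLists, Finset.mem_biUnion, Finset.mem_univ, true_and,
        Finset.mem_image, List.cons.injEq, List.mem_cons, forall_eq_or_imp, List.sum_cons]
      constructor
      · rintro ⟨j, J, hJ, rfl, rfl⟩
        have := ih.1 hJ
        exact ⟨⟨by omega, this.1⟩, by omega⟩
      · rintro ⟨⟨hi, hI⟩, hs⟩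
        exact ⟨⟨i - 1, by omega⟩, I, ih.2 ⟨hI, by simp; omega⟩, by simp; omega, rfl⟩

theorem sum_compositionLists_succ {M : Type*} [AddCommMonoid M] (f : List ℕ → M) (n : ℕ) :
    ∑ I ∈ compositionLists (n + 1), f I =
      ∑ p ∈ Finset.HasAntidiagonal.antidiagonal n,
        ∑ I ∈ compositionLists p.2, f ((p.1 + 1) :: I) := by
  rw [compositionLists, Finset.sum_biUnion, Finset.Nat.sum_antidiagonal_eq_sum_range_succ
    (fun i m => ∑ I ∈ compositionLists m, f ((i + 1) :: I)), ← Fin.sum_univ_eq_sum_range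
    (fun i => ∑ I ∈ compositionLists (n - i), f ((i + 1) :: I))]
  · refine Finset.sum_congr rfl fun i _ => Finset.sum_image ?_
    intro a _ b _ h
    exact (List.cons.inj h).2
  · intro i _ j _ hij
    rw [Function.onFun, Finset.disjoint_left]
    simp only [Finset.mem_image, not_exists, not_and]
    rintro _ ⟨a, _, rfl⟩ b _ h
    have := (List.cons.inj h).1
    exact hij (Fin.ext (by omega))

theorem sum_compositionLists_reverse {M : Type*} [AddCommMonoid M] (f : List ℕ → M) (n : ℕ) :
    ∑ I ∈ compositionLists n, f I.reverse = ∑ I ∈ compositionLists n, f I :=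
  Finset.sum_nbij' List.reverse List.reverse (by simp [mem_compositionLists])
    (by simp [mem_compositionLists]) (by simp) (by simp) (by simp)

/-- The sum of `reducedG` over all compositions of `n`. -/
noncomputable def reducedSum (n : ℕ) : ℝ[X][X] := ∑ I ∈ compositionLists n, reducedG I

theorem reducedSum_zero : reducedSum 0 = 1 := by
  simp [reducedSum, compositionLists, reducedG]

theorem derivative_reducedSum_succ (n : ℕ) :
    derivative (reducedSum (n + 1)) =
      ∑ p ∈ Finset.HasAntidiagonal.antidiagonal n, segmentPoly ^ p.1 * reducedSum p.2 := by
  simp [reducedSum, sum_compositionLists_succ, reducedG, Finset.mul_sum]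

theorem eval_zero_reducedSum_succ (n : ℕ) : (reducedSum (n + 1)).eval 0 = 0 := by
  simp [reducedSum, sum_compositionLists_succ, reducedG, eval_finsetSum]

/-- The antiderivative of `k (q + (1 - q) u) ^ (k - 1)` vanishing at `u = 0`. -/
noncomputable def segmentSum (k : ℕ) : ℝ[X][X] :=
  X * ∑ j ∈ Finset.range k, segmentPoly ^ j * C X ^ (k - 1 - j)

theorem one_sub_mul_segmentSum (k : ℕ) :
    (1 - C X) * segmentSum k = segmentPoly ^ k - C X ^ k := by
  rw [← (Commute.all _ _).geom_sum₂_mul, segmentSum, segmentPoly]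
  ring

theorem derivative_segmentSum_succ (k : ℕ) :
    derivative (segmentSum (k + 1)) = ((k + 1 : ℕ) : ℝ[X][X]) * segmentPoly ^ k := by
  have hne : (1 - C X : ℝ[X][X]) ≠ 0 := by
    rw [← C_1, ← C_sub, Ne, C_eq_zero, sub_eq_zero]
    exact fun h => X_ne_C 1 h.symm
  have h := congrArg derivative (one_sub_mul_segmentSum (k + 1))
  refine mul_left_cancel₀ hne ?_
  have hs : derivative segmentPoly = 1 - C X := by simp [segmentPoly]
  have hX : derivative (C X : ℝ[X][X]) = 0 := derivative_C
  rw [derivative_mul, derivative_sub, derivative_sub, derivative_pow, derivative_pow, hX,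
    derivative_one, hs] at h
  simp only [sub_zero, zero_mul, mul_zero, zero_add, add_tsub_cancel_right] at h
  rw [h]
  simp
  ring

theorem eq_of_derivative_eq {p r : ℝ[X][X]} (h : derivative p = derivative r)
    (h₀ : p.eval 0 = r.eval 0) : p = r := by
  have hd : derivative (p - r) = 0 := by rw [derivative_sub, h, sub_self]
  have hC := eq_C_of_natDegree_eq_zero (derivative_eq_zero.1 hd)
  have he : (p - r).eval 0 = 0 := by rw [eval_sub, h₀, sub_self]
  rw [hC, eval_C] at he
  rw [he, C_0] at hC
  exact sub_eq_zero.1 hC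

theorem succ_mul_reducedSum_succ (n : ℕ) :
    ((n + 1 : ℕ) : ℝ[X][X]) * reducedSum (n + 1) =
      ∑ p ∈ Finset.HasAntidiagonal.antidiagonal n, segmentSum (p.1 + 1) * reducedSum p.2 := by
  induction n using Nat.strong_induction_on with
  | _ n ih =>
  refine eq_of_derivative_eq ?_ ?_
  · have key :
        ∑ p ∈ Finset.HasAntidiagonal.antidiagonal n,
          segmentSum (p.1 + 1) * derivative (reducedSum p.2) =
        ∑ p ∈ Finset.HasAntidiagonal.antidiagonal n,
          segmentPoly ^ p.1 * ((p.2 : ℝ[X][X]) * reducedSum p.2) := by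
      cases n with
      | zero => simp [reducedSum_zero]
      | succ n =>
        rw [Finset.Nat.sum_antidiagonal_succ', Finset.Nat.sum_antidiagonal_succ']
        simp only [reducedSum_zero, derivative_one, Nat.cast_zero, zero_mul, mul_zero, zero_add]
        have h := congrArg (PowerSeries.coeff n) (mul_left_comm
          (PowerSeries.mk fun i => segmentSum (i + 1)) (PowerSeries.mk fun i => segmentPoly ^ i)
          (PowerSeries.mk reducedSum))
        simp only [PowerSeries.coeff_mul, PowerSeries.coeff_mk] at h
        simp only [derivative_reducedSum_succ]
        rw [h]
        refine Finset.sum_congr rfl fun p hp => ?_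
        rw [ih p.2 (by have := Finset.HasAntidiagonal.mem_antidiagonal.1 hp; omega)]
    rw [derivative_natCast_mul, derivative_reducedSum_succ, derivative_sum]
    simp only [derivative_mul, derivative_segmentSum_succ]
    rw [Finset.sum_add_distrib, key, ← Finset.sum_add_distrib, Finset.mul_sum]
    refine Finset.sum_congr rfl fun p hp => ?_
    rw [← Finset.HasAntidiagonal.mem_antidiagonal.1 hp]
    push_cast
    ring
  · simp [eval_zero_reducedSum_succ, eval_finsetSum, segmentSum]

/-- The value at `q` of `∑ I, P_I(q) / n!` over compositions `I` of `n`. -/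
noncomputable def reducedTotal (q : ℝ) (n : ℕ) : ℝ := ((reducedSum n).eval 1).eval q

theorem reducedTotal_zero (q : ℝ) : reducedTotal q 0 = 1 := by
  simp [reducedTotal, reducedSum_zero]

theorem succ_mul_reducedTotal_succ (q : ℝ) (n : ℕ) :
    (n + 1 : ℝ) * reducedTotal q (n + 1) =
      ∑ p ∈ Finset.HasAntidiagonal.antidiagonal n,
        (∑ j ∈ Finset.range (p.1 + 1), q ^ j) * reducedTotal q p.2 := by
  have h := congrArg (fun p => (p.eval 1).eval q) (succ_mul_reducedSum_succ n)
  simp only [eval_mul, eval_natCast, Nat.cast_add, Nat.cast_one, eval_add, eval_one,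
    eval_finsetSum, segmentSum, segmentPoly, eval_X, one_mul, eval_pow, eval_C, mul_one,
    eval_sub, add_sub_cancel, one_pow, add_tsub_cancel_right] at h
  rw [reducedTotal, h]
  refine Finset.sum_congr rfl fun p _ => ?_
  rw [← Finset.sum_range_reflect (fun j => q ^ j), reducedTotal]
  simp only [add_tsub_cancel_right]

end

/-- The words using each letter of `U` exactly once. -/
def words (U : Finset ℕ) : Finset (List ℕ) :=
  ⟨↑(U.sort).permutations, List.nodup_permutations _ (U.sort_nodup _)⟩

theorem mem_words {U : Finset ℕ} {B : List ℕ} : B ∈ words U ↔ B.Nodup ∧ B.toFinset = U := by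
  have h : B ∈ words U ↔ B.Perm U.sort := List.mem_permutations
  rw [h]
  constructor
  · intro hp
    exact ⟨hp.nodup_iff.2 (U.sort_nodup _), by rw [List.toFinset_eq_of_perm _ _ hp]; simp⟩
  · rintro ⟨hB, rfl⟩
    rw [List.perm_ext_iff_of_nodup hB (Finset.sort_nodup _ _)]
    simp

theorem card_words (U : Finset ℕ) : (words U).card = U.card.factorial := by
  change (U.sort).permutations.length = _
  rw [List.length_permutations, Finset.length_sort]

/-- The number of letters of `B` strictly greater than its last letter. -/
def blockSinv (B : List ℕ) : ℕ := B.countP fun x => decide (B.getLastD 0 < x)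

theorem sum_pow_card_filter_lt (q : ℝ) (U : Finset ℕ) :
    ∑ m ∈ U, q ^ (U.filter (m < ·)).card = ∑ j ∈ Finset.range U.card, q ^ j := by
  induction U using Finset.induction_on_min with
  | empty => simp
  | insert a U ha ih =>
    have hmem : a ∉ U := fun h => lt_irrefl a (ha a h)
    rw [Finset.sum_insert hmem, Finset.card_insert_of_notMem hmem, Finset.sum_range_succ, add_comm,
      ← ih]
    congr 1
    · refine Finset.sum_congr rfl fun m hm => ?_
      rw [Finset.filter_insert, if_neg (ha m hm).not_gt]
    · rw [Finset.filter_insert, if_neg (lt_irrefl a), Finset.filter_true_of_mem ha]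

theorem sum_words_eq_sum_concat {M : Type*} [AddCommMonoid M] (f : List ℕ → M) {U : Finset ℕ}
    (hU : U.Nonempty) :
    ∑ B ∈ words U, f B = ∑ m ∈ U, ∑ B ∈ words (U.erase m), f (B ++ [m]) := by
  rw [Finset.sum_sigma']
  symm
  refine Finset.sum_bij (fun p _ => p.2 ++ [p.1]) ?_ ?_ ?_ (fun _ _ => rfl)
  · rintro ⟨m, B⟩ h
    simp only [Finset.mem_sigma, mem_words] at h ⊢
    obtain ⟨hm, hB, hBU⟩ := h
    have hmB : m ∉ B := by
      rw [← List.mem_toFinset, hBU]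
      exact Finset.notMem_erase m U
    refine ⟨List.nodup_append'.2 ⟨hB, List.nodup_singleton m, by simpa using hmB⟩, ?_⟩
    rw [List.toFinset_append, hBU, List.toFinset_cons, List.toFinset_nil, insert_empty_eq,
      Finset.union_comm, ← Finset.insert_eq, Finset.insert_erase hm]
  · rintro ⟨m, B⟩ _ ⟨m', B'⟩ _ h
    obtain ⟨rfl, rfl⟩ := List.append_singleton_inj.1 h |>.symm
    rfl
  · intro B h
    obtain ⟨hB, rfl⟩ := mem_words.1 h
    rcases List.eq_nil_or_concat' B with rfl | ⟨B', m, rfl⟩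
    · simp at hU
    · obtain ⟨hB', -, hd⟩ := List.nodup_append'.1 hB
      have hm : m ∉ B' := by simpa using hd
      refine ⟨⟨m, B'⟩, ?_, rfl⟩
      simp only [Finset.mem_sigma, mem_words]
      refine ⟨by simp, hB', ?_⟩
      ext x
      simp only [List.mem_toFinset, Finset.mem_erase, List.mem_append, List.mem_singleton]
      constructor
      · exact fun hx => ⟨fun h => hm (h ▸ hx), Or.inl hx⟩
      · rintro ⟨h₁, h₂ | h₂⟩
        exacts [h₂, absurd h₂ h₁]

theorem sum_words_pow_blockSinv (q : ℝ) {U : Finset ℕ} (hU : U.Nonempty) :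
    ∑ B ∈ words U, q ^ blockSinv B =
      (U.card - 1).factorial * ∑ j ∈ Finset.range U.card, q ^ j := by
  rw [sum_words_eq_sum_concat _ hU, ← sum_pow_card_filter_lt, Finset.mul_sum]
  refine Finset.sum_congr rfl fun m hm => ?_
  rw [← Finset.card_erase_of_mem hm, ← card_words, ← nsmul_eq_mul]
  refine Finset.sum_eq_card_nsmul fun B hB => ?_
  obtain ⟨hB, hBU⟩ := mem_words.1 hB
  congr 1
  have hf : U.filter (m < ·) = (B.filter (m < ·)).toFinset := by
    ext x
    simp only [Finset.mem_filter, List.mem_toFinset, List.mem_filter, decide_eq_true_eq]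
    rw [← List.mem_toFinset, hBU, Finset.mem_erase]
    constructor
    · exact fun h => ⟨⟨h.2.ne', h.1⟩, h.2⟩
    · exact fun h => ⟨h.1.2, h.2⟩
  rw [hf, List.toFinset_card_of_nodup (hB.filter _), ← List.countP_eq_length_filter]
  simp [blockSinv]

/-- A family of disjoint nonempty blocks whose letters are those of `T`. -/
def IsBlockFamily (T : Finset ℕ) (L : List (List ℕ)) : Prop :=
  (∀ B ∈ L, B ≠ []) ∧ L.flatten.Nodup ∧ ∀ x, x ∈ L.flatten ↔ x ∈ T

theorem IsBlockFamily.perm {T : Finset ℕ} {L L' : List (List ℕ)} (h : IsBlockFamily T L)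
    (hp : L.Perm L') : IsBlockFamily T L' :=
  ⟨fun B hB => h.1 B (hp.mem_iff.2 hB), hp.flatten.nodup_iff.1 h.2.1,
    fun x => hp.flatten.mem_iff.symm.trans (h.2.2 x)⟩

theorem isBlockFamily_cons {T : Finset ℕ} {B : List ℕ} {L : List (List ℕ)} :
    IsBlockFamily T (B :: L) ↔
      B ≠ [] ∧ B.Nodup ∧ B.toFinset ⊆ T ∧ IsBlockFamily (T \ B.toFinset) L := by
  simp only [IsBlockFamily, List.mem_cons, forall_eq_or_imp, List.flatten_cons,
    List.nodup_append', List.mem_append, Finset.mem_sdiff, List.mem_toFinset,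
    Finset.subset_iff, List.disjoint_left]
  constructor
  · rintro ⟨⟨h₁, h₂⟩, ⟨h₃, h₄, h₅⟩, h₆⟩
    refine ⟨h₁, h₃, fun x hx => (h₆ x).1 (Or.inl hx), h₂, h₄, fun x => ⟨fun hx => ?_, ?_⟩⟩
    · exact ⟨(h₆ x).1 (Or.inr hx), fun hB => h₅ hB hx⟩
    · rintro ⟨hT, hB⟩
      exact ((h₆ x).2 hT).resolve_left hB
  · rintro ⟨h₁, h₂, h₃, h₄, h₅, h₆⟩
    refine ⟨⟨h₁, h₄⟩, ⟨h₂, h₅, fun x hB hx => ((h₆ x).1 hx).2 hB⟩, fun x => ⟨?_, fun hT => ?_⟩⟩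
    · rintro (hB | hx)
      exacts [h₃ hB, ((h₆ x).1 hx).1]
    · by_cases hB : x ∈ B
      exacts [Or.inl hB, Or.inr ((h₆ x).2 ⟨hT, hB⟩)]

theorem IsBlockFamily.pairwise_getLastD_ne {T : Finset ℕ} {L : List (List ℕ)}
    (h : IsBlockFamily T L) : L.Pairwise fun B C => B.getLastD 0 ≠ C.getLastD 0 := by
  have hmem : ∀ B ∈ L, B.getLastD 0 ∈ B := fun B hB => by
    rw [List.getLastD_eq_getLast?, List.getLast?_eq_some_getLast (h.1 B hB)]
    exact List.getLast_mem (h.1 B hB)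
  refine (List.nodup_flatten.1 h.2.1).2.imp_of_mem fun {B C} hB hC hd he => ?_
  exact hd (hmem B hB) (he ▸ hmem C hC)

theorem IsBlockFamily.block_ext {T : Finset ℕ} {L : List (List ℕ)} (h : IsBlockFamily T L)
    {a : ℕ} {B C : List ℕ} (hB : B ∈ L) (hC : C ∈ L) (haB : a ∈ B) (haC : a ∈ C) : B = C := by
  by_contra hne
  have : Std.Symm (List.Disjoint (α := ℕ)) := ⟨fun _ _ h => h.symm⟩
  exact (List.nodup_flatten.1 h.2.1).2.forall hB hC hne haB haC

/-- The comparison of blocks by their last letters. -/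
abbrev lastLE (B C : List ℕ) : Prop := B.getLastD 0 ≤ C.getLastD 0

instance : Std.Total lastLE := ⟨fun _ _ => le_total _ _⟩
instance : IsTrans (List ℕ) lastLE := ⟨fun _ _ _ => le_trans⟩

/-- A block family ordered by increasing last letters. -/
def IsPermutitionOf (T : Finset ℕ) (L : List (List ℕ)) : Prop :=
  IsBlockFamily T L ∧ L.Pairwise lastLE

theorem IsPermutitionOf.eq_of_perm {T : Finset ℕ} {L L' : List (List ℕ)}
    (h : IsPermutitionOf T L) (h' : IsPermutitionOf T L') (hp : L.Perm L') : L = L' := by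
  refine hp.eq_of_pairwise (fun B C hB hC h₁ h₂ => ?_) h.2 h'.2
  by_contra hne
  have : Std.Symm fun B C : List ℕ => B.getLastD 0 ≠ C.getLastD 0 := ⟨fun _ _ h => h.symm⟩
  exact h.1.pairwise_getLastD_ne.forall hB (hp.mem_iff.2 hC) hne
    (le_antisymm h₁ h₂)

theorem isPermutition_iff_s9 {n : ℕ} {L : List (List ℕ)} :
    IsPermutition n L ↔ IsPermutitionOf (Finset.Icc 1 n) L := by
  have hchain : List.Chain' (· < ·) (L.map fun B => B.getLastD 0) ↔
      L.Pairwise fun B C => B.getLastD 0 < C.getLastD 0 :=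
    List.isChain_iff_pairwise.trans List.pairwise_map
  simp only [IsPermutition, hchain, IsPermutitionOf, IsBlockFamily, Finset.mem_Icc, and_assoc]
  refine and_congr_right fun h₁ => and_congr_right fun h₂ => and_congr_right fun h₃ => ?_
  refine ⟨fun h => h.imp le_of_lt, fun h => ?_⟩
  have hne := IsBlockFamily.pairwise_getLastD_ne (T := Finset.Icc 1 n)
    ⟨h₁, h₂, by simpa only [Finset.mem_Icc] using h₃⟩
  exact h.imp₂ (fun _ _ => lt_of_le_of_ne) hne

theorem isPermutitionOf_orderedInsert {T : Finset ℕ} {B : List ℕ} {L : List (List ℕ)}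
    (hne : B ≠ []) (hB : B.Nodup) (hT : B.toFinset ⊆ T)
    (hL : IsPermutitionOf (T \ B.toFinset) L) :
    IsPermutitionOf T (L.orderedInsert lastLE B) :=
  ⟨(isBlockFamily_cons.2 ⟨hne, hB, hT, hL.1⟩).perm (List.perm_orderedInsert _ _ _).symm,
    hL.2.orderedInsert _ _⟩

theorem isPermutitionOf_empty {L : List (List ℕ)} : IsPermutitionOf ∅ L ↔ L = [] := by
  constructor
  · rintro ⟨h, -⟩
    cases L with
    | nil => rfl
    | cons B L =>
      obtain ⟨hne, -, hB, -⟩ := isBlockFamily_cons.1 h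
      exact absurd (List.toFinset_eq_empty_iff _ |>.1 (Finset.subset_empty.1 hB)) hne
  · rintro rfl
    simp [IsPermutitionOf, IsBlockFamily]

theorem sinv_orderedInsert (B : List ℕ) (L : List (List ℕ)) :
    sinv (L.orderedInsert lastLE B) = blockSinv B + sinv L := by
  rw [sinv, ((List.perm_orderedInsert lastLE B L).map _).sum_eq]
  rfl

theorem exists_finset_isPermutitionOf_insert {a : ℕ} {T : Finset ℕ} (ha : a ∉ T)
    (F : Finset ℕ → Finset (List (List ℕ)))
    (hF : ∀ U ⊆ T, ∀ L, L ∈ F (T \ U) ↔ IsPermutitionOf (T \ U) L) (q : ℝ) :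
    ∃ E : Finset (List (List ℕ)), (∀ L, L ∈ E ↔ IsPermutitionOf (insert a T) L) ∧
      ∑ L ∈ E, q ^ sinv L = ∑ U ∈ T.powerset,
        (∑ B ∈ words (insert a U), q ^ blockSinv B) * ∑ L ∈ F (T \ U), q ^ sinv L := by
  classical
  let D := T.powerset.sigma fun U => words (insert a U) ×ˢ F (T \ U)
  let φ : (_ : Finset ℕ) × List ℕ × List (List ℕ) → List (List ℕ) :=
    fun p => p.2.2.orderedInsert lastLE p.2.1
  have hsdiff : ∀ U, insert a T \ insert a U = T \ U := fun U => by
    rw [Finset.insert_sdiff_insert, Finset.sdiff_insert_of_notMem ha]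
  have hD : ∀ p ∈ D, p.2.1.toFinset = insert a p.1 ∧ p.1 ⊆ T ∧
      IsPermutitionOf (T \ p.1) p.2.2 ∧ IsPermutitionOf (insert a T) (φ p) := by
    rintro ⟨U, B, L⟩ hp
    simp only [D, Finset.mem_sigma, Finset.mem_powerset, Finset.mem_product, mem_words] at hp
    obtain ⟨hU, ⟨hB, hBU⟩, hL⟩ := hp
    rw [hF U hU] at hL
    refine ⟨hBU, hU, hL, isPermutitionOf_orderedInsert ?_ hB ?_ ?_⟩
    · rintro rfl
      exact Finset.insert_ne_empty a U hBU.symm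
    · simpa only [hBU] using Finset.insert_subset_insert a hU
    · simpa only [hBU, hsdiff] using hL
  have hinj : Set.InjOn φ D := by
    rintro ⟨U, B, L⟩ hp ⟨U', B', L'⟩ hp' heq
    obtain ⟨hB, hU, hL, hφ⟩ := hD _ hp
    obtain ⟨hB', hU', hL', hφ'⟩ := hD _ hp'
    dsimp only [φ] at *
    have haB : a ∈ B := by rw [← List.mem_toFinset, hB]; exact Finset.mem_insert_self a U
    have haB' : a ∈ B' := by rw [← List.mem_toFinset, hB']; exact Finset.mem_insert_self a U'
    obtain rfl : B = B' := hφ.1.block_ext ((List.mem_orderedInsert _).2 (Or.inl rfl))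
      (by rw [heq]; exact (List.mem_orderedInsert _).2 (Or.inl rfl)) haB haB'
    obtain rfl : U = U' := by
      rw [← Finset.erase_insert (fun h => ha (hU h)), ← hB, hB',
        Finset.erase_insert (fun h => ha (hU' h))]
    have hp : (B :: L).Perm (B :: L') := (List.perm_orderedInsert lastLE B L).symm.trans
      (heq ▸ List.perm_orderedInsert lastLE B L')
    rw [hL.eq_of_perm hL' hp.cons_inv]
  refine ⟨D.image φ, fun L => ⟨fun h => ?_, fun h => ?_⟩, ?_⟩
  · obtain ⟨p, hp, rfl⟩ := Finset.mem_image.1 h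
    exact (hD p hp).2.2.2
  · obtain ⟨B, hB, haB⟩ := List.mem_flatten.1 ((h.1.2.2 a).2 (Finset.mem_insert_self a T))
    have hperm := List.perm_cons_erase hB
    obtain ⟨hne, hnd, hsub, hrest⟩ := isBlockFamily_cons.1 (h.1.perm hperm)
    have hBU : insert a (B.toFinset.erase a) = B.toFinset :=
      Finset.insert_erase (List.mem_toFinset.2 haB)
    have hU : B.toFinset.erase a ⊆ T := by
      exact Finset.subset_insert_iff.1 hsub
    have hL : IsPermutitionOf (T \ B.toFinset.erase a) (L.erase B) := by
      refine ⟨?_, h.2.sublist List.erase_sublist⟩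
      rwa [← hsdiff, hBU]
    refine Finset.mem_image.2 ⟨⟨B.toFinset.erase a, B, L.erase B⟩, ?_, ?_⟩
    · simp only [D, Finset.mem_sigma, Finset.mem_powerset, Finset.mem_product, mem_words]
      exact ⟨hU, ⟨hnd, hBU.symm⟩, (hF _ hU _).2 hL⟩
    · refine (isPermutitionOf_orderedInsert hne hnd hsub ?_).eq_of_perm h
        ((List.perm_orderedInsert _ _ _).trans hperm.symm)
      rwa [← hBU, hsdiff]
  · rw [Finset.sum_image hinj, Finset.sum_sigma]
    refine Finset.sum_congr rfl fun U _ => ?_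
    rw [Finset.sum_mul_sum, Finset.sum_product]
    simp only [φ, sinv_orderedInsert, pow_add]

theorem factorial_mul_reducedTotal_succ (q : ℝ) (n : ℕ) :
    ∑ k ∈ Finset.range (n + 1), n.choose k • ((k.factorial * ∑ j ∈ Finset.range (k + 1), q ^ j) *
      ((n - k).factorial * reducedTotal q (n - k))) =
      (n + 1).factorial * reducedTotal q (n + 1) := by
  rw [Nat.factorial_succ, mul_comm (n + 1), Nat.cast_mul, Nat.cast_succ, mul_assoc,
    succ_mul_reducedTotal_succ, Finset.Nat.sum_antidiagonal_eq_sum_range_succ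
    (fun k m => (∑ j ∈ Finset.range (k + 1), q ^ j) * reducedTotal q m), Finset.mul_sum]
  refine Finset.sum_congr rfl fun k hk => ?_
  rw [← Nat.choose_mul_factorial_mul_factorial (Finset.mem_range_succ_iff.1 hk)]
  push_cast
  rw [nsmul_eq_mul]
  ring

theorem exists_finset_isPermutitionOf (q : ℝ) (T : Finset ℕ) :
    ∃ F : Finset (List (List ℕ)), (∀ L, L ∈ F ↔ IsPermutitionOf T L) ∧
      ∑ L ∈ F, q ^ sinv L = T.card.factorial * reducedTotal q T.card := by
  induction T using Finset.strongInduction with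
  | H T ih =>
  rcases T.eq_empty_or_nonempty with rfl | ⟨a, ha⟩
  · exact ⟨{[]}, by simp [isPermutitionOf_empty], by simp [sinv, reducedTotal_zero]⟩
  obtain ⟨S, hS, rfl⟩ : ∃ S, a ∉ S ∧ insert a S = T :=
    ⟨T.erase a, Finset.notMem_erase a T, Finset.insert_erase ha⟩
  choose! F hF hsum using ih
  have hlt : ∀ U, S \ U ⊂ insert a S := fun U =>
    Finset.sdiff_subset.trans_ssubset (Finset.ssubset_insert hS)
  obtain ⟨E, hE, hEsum⟩ :=
    exists_finset_isPermutitionOf_insert hS F (fun U _ => hF _ (hlt U)) q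
  refine ⟨E, hE, ?_⟩
  rw [hEsum, Finset.card_insert_of_notMem hS, ← factorial_mul_reducedTotal_succ,
    ← Finset.sum_powerset_apply_card (fun k => (k.factorial * ∑ j ∈ Finset.range (k + 1), q ^ j) *
      ((S.card - k).factorial * reducedTotal q (S.card - k)))]
  refine Finset.sum_congr rfl fun U hU => ?_
  have hUS := Finset.mem_powerset.1 hU
  rw [sum_words_pow_blockSinv q (Finset.insert_nonempty a U), hsum _ (hlt U),
    Finset.card_insert_of_notMem (fun h => hS (hUS h)), Finset.card_sdiff_of_subset hUS,
    add_tsub_cancel_right]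

/-- summing over all compositions `I` of `n`, the reduced polynomials
`P_I(q) = n!·g_I(q)/(1−q)^{ℓ(I)}` (exhibited here as genuine polynomials, so that the
statement also makes sense at `q = 1`) satisfy
`Σ_I P_I(q) = Σ_π q^{sinv(π)}`, the right sum ranging over all permutitions of size `n`;
in particular at `q = 1` the left side counts all permutitions of size `n`. -/
theorem sum_reduced_polynomials_eq_sum_over_permutitions (n : ℕ) (hn : 0 < n) :
    ∃ P : List ℕ → Polynomial ℝ,
      (∀ I : List ℕ, (∀ i ∈ I, 0 < i) → I.sum = n →
        ∀ q : ℝ, (Nat.factorial n : ℝ) * g q I = (1 - q) ^ I.length * (P I).eval q) ∧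
      ∀ q : ℝ,
        (∑ᶠ I ∈ {I : List ℕ | (∀ i ∈ I, 0 < i) ∧ I.sum = n}, (P I).eval q) =
          ∑ᶠ L ∈ {L : List (List ℕ) | IsPermutition n L}, q ^ sinv L := by
  refine ⟨fun I => n.factorial • (reducedG I.reverse).eval 1, fun I _ _ q => ?_, fun q => ?_⟩
  · beta_reduce
    rw [g_eq, nsmul_eq_mul, Polynomial.eval_mul, Polynomial.eval_natCast]
    ring
  · obtain ⟨F, hF, hsum⟩ := exists_finset_isPermutitionOf q (Finset.Icc 1 n)
    rw [Nat.card_Icc, add_tsub_cancel_right] at hsum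
    have hperm : {L | IsPermutition n L} = (F : Set (List (List ℕ))) := by
      ext L
      exact isPermutition_iff_s9.trans (hF L).symm
    have hcomp : {I : List ℕ | (∀ i ∈ I, 0 < i) ∧ I.sum = n} = compositionLists n := by
      ext I
      exact mem_compositionLists.symm
    rw [hperm, hcomp, finsum_mem_coe_finset, finsum_mem_coe_finset, hsum,
      sum_compositionLists_reverse fun I => (n.factorial • (reducedG I).eval 1).eval q,
      reducedTotal, reducedSum, Polynomial.eval_finsetSum, Polynomial.eval_finsetSum,
      Finset.mul_sum]
    simp
end
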